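/- arXiv:1507.02035 — 2 statements merged into one kernel-verified Lean document; each statement's English description precedes it below -/
import Mathlib

section
/- Let ρ ∈ ℕ, δ ∈ [0,1/2], β > 0, and let a be an h-dependent symbol in the class S_{δ,β}(⟨(x+p'(ξ))/√h⟩^{−1}), where p(ξ) = √(1+ξ²). Then there exist C > 0 and σ > 0 depending linearly on β such that for every h ∈ (0,1] and every Schwartz function v, ‖Op_h^w(a)v‖_{W^{ρ,∞}_h} ≤ C h^{−1/4−σ} ‖v‖_{L²(ℝ)}. -/
noncomputable section

open MeasureTheory Filter

/-- The Fourier transform on `ℝ`. -/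
def FT (f : ℝ → ℂ) : ℝ → ℂ := FourierTransform.fourier f
/-- The inverse Fourier transform on `ℝ`. -/
def FTinv (f : ℝ → ℂ) : ℝ → ℂ := FourierTransformInv.fourierInv f

/-- The `L²(ℝ)` norm. -/
def L2Norm (f : ℝ → ℂ) : ℝ := (∫ x : ℝ, ‖f x‖ ^ 2) ^ ((1:ℝ)/2)
/-- The `L^∞(ℝ)` norm (as a supremum). -/
def LinfNorm (f : ℝ → ℂ) : ℝ := ⨆ x : ℝ, ‖f x‖
/-- The semiclassical Sobolev norm `‖v‖_{H^s_h}`. -/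
def HhNorm (h s : ℝ) (f : ℝ → ℂ) : ℝ :=
  (∫ ξ : ℝ, (1 + (h*ξ)^2) ^ s * ‖FT f ξ‖ ^ 2) ^ ((1:ℝ)/2)
/-- Fourier multiplier with multiplier `m` (at frequency `ξ`, factor `m ξ`). -/
def FMul (m : ℝ → ℂ) (f : ℝ → ℂ) : ℝ → ℂ := FTinv (fun ξ => m ξ * FT f ξ)
/-- The semiclassical Japanese bracket `⟨hD⟩^r`, Fourier multiplier `(1+|hξ|²)^{r/2}`. -/
def JBh (h r : ℝ) (f : ℝ → ℂ) : ℝ → ℂ :=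
  FMul (fun ξ => (((1 + (h*ξ)^2) ^ (r/2) : ℝ) : ℂ)) f
/-- Partial derivative in time of a function of `(t,x)`. -/
def pdt (u : ℝ → ℝ → ℝ) : ℝ → ℝ → ℝ := fun t x => deriv (fun s => u s x) t
/-- Partial derivative in space of a function of `(t,x)`. -/
def pdx (u : ℝ → ℝ → ℝ) : ℝ → ℝ → ℝ := fun t x => deriv (fun y => u t y) x
/-- The `L²(ℝ)` norm of a real valued function. -/
def L2R (f : ℝ → ℝ) : ℝ := (∫ x : ℝ, (f x)^2) ^ ((1:ℝ)/2)
/-- The Sobolev `H^s(ℝ)` norm of a real valued function. -/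
def HsR (s : ℝ) (f : ℝ → ℝ) : ℝ := HhNorm 1 s (fun x => ((f x : ℝ) : ℂ))
/-- The norm `‖ψ(t,·)‖_{W^{t,ρ,∞}} = Σ_{i=0}² ‖⟨D_x⟩^{ρ−i} D_t^i ψ(t,·)‖_{L^∞}`. -/
def WtNorm (ρ : ℝ) (u : ℝ → ℝ → ℝ) (t : ℝ) : ℝ :=
  ∑ i ∈ Finset.range 3, LinfNorm (JBh 1 (ρ - (i:ℝ)) (fun x => (((pdt^[i] u) t x : ℝ) : ℂ)))
/-- The Klainerman vector field `Z = t∂_x + x∂_t` applied to `u`. -/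
def Zf (u : ℝ → ℝ → ℝ) : ℝ → ℝ → ℝ := fun t x => t * pdx u t x + x * pdt u t x

/-- `ω₀(x) = 1/√(1-x²)`. -/
def ω₀ (x : ℝ) : ℝ := 1 / Real.sqrt (1 - x^2)
/-- `ω₁(x) = -x/√(1-x²)`. -/
def ω₁ (x : ℝ) : ℝ := -x / Real.sqrt (1 - x^2)
/-- `φ(x) = √(1-x²)`. -/
def φfn (x : ℝ) : ℝ := Real.sqrt (1 - x^2)
/-- Partial derivative in `x` of a symbol `a(x,ξ)`. -/
def pd1 (f : ℝ → ℝ → ℂ) : ℝ → ℝ → ℂ := fun x ξ => deriv (fun x' => f x' ξ) x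
/-- Partial derivative in `ξ` of a symbol `a(x,ξ)`. -/
def pd2 (f : ℝ → ℝ → ℂ) : ℝ → ℝ → ℂ := fun x ξ => deriv (fun ξ' => f x ξ') ξ

/-- The Japanese bracket `⟨z⟩ = √(1+z²)`. -/
def jap (z : ℝ) : ℝ := Real.sqrt (1 + z^2)

/-- A function of `(x,ξ)` is (the restriction of) a Schwartz function on `ℝ²`. -/
def IsSchwartz2 (f : ℝ → ℝ → ℂ) : Prop :=
  ∃ g : SchwartzMap (ℝ × ℝ) ℂ, ∀ x ξ : ℝ, g (x, ξ) = f x ξ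

/-- An `h`-dependent symbol family is Schwartz in `(x,ξ)` for each `h`. -/
def SchwartzFamily (a : ℝ → ℝ → ℝ → ℂ) : Prop :=
  ∀ h ∈ Set.Ioc (0:ℝ) 1, IsSchwartz2 (a h)

/-- The symbol estimates of the class `S_{δ,β}(M)`, with explicit constants
`Cc α₁ α₂ N` : for all derivatives,
`|∂_x^{α₁}∂_ξ^{α₂}a| ≤ C M(x,ξ) h^{−δ(α₁+α₂)} (1+βh^β|ξ|)^{−N}`.
The weight `M` is allowed to depend on `h`. -/
def SymBound (δ β : ℝ) (M : ℝ → ℝ → ℝ → ℝ) (Cc : ℕ → ℕ → ℕ → ℝ)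
    (a : ℝ → ℝ → ℝ → ℂ) : Prop :=
  ∀ α₁ α₂ N : ℕ, ∀ h ∈ Set.Ioc (0:ℝ) 1, ∀ x ξ : ℝ,
    ‖(pd1^[α₁] (pd2^[α₂] (a h))) x ξ‖ ≤
      Cc α₁ α₂ N * M h x ξ * h ^ (-(δ * ((α₁ : ℝ) + (α₂ : ℝ)))) *
        (1 + β * h ^ β * |ξ|) ^ (-(N : ℝ))

/-- The symbol class `S_{δ,β}(M)` (for some constants). -/
def SymClass (δ β : ℝ) (M : ℝ → ℝ → ℝ → ℝ) (a : ℝ → ℝ → ℝ → ℂ) : Prop :=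
  ∃ Cc : ℕ → ℕ → ℕ → ℝ, SymBound δ β M Cc a

/-- An order function on `ℝ×ℝ`. -/
def IsOrderFn (M : ℝ → ℝ → ℝ) : Prop :=
  ContDiff ℝ (⊤ : ℕ∞) (fun p : ℝ × ℝ => M p.1 p.2) ∧ (∀ x ξ, 0 < M x ξ) ∧
  ∃ N₀ : ℕ, ∃ C : ℝ, 0 < C ∧ ∀ x ξ y η : ℝ,
    M y η ≤ C * jap (x - y) ^ N₀ * jap (ξ - η) ^ N₀ * M x ξ

/-- `p(ξ) = √(1+ξ²)`. -/
def pfun (ξ : ℝ) : ℝ := Real.sqrt (1 + ξ^2)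
/-- `p'(ξ) = ξ/√(1+ξ²)`. -/
def pprime (ξ : ℝ) : ℝ := ξ / Real.sqrt (1 + ξ^2)

/-- The semiclassical Weyl quantization
`Op_h^w(a)v(x) = (2πh)⁻¹ ∫∫ e^{i(x−y)ξ/h} a((x+y)/2,ξ) v(y) dy dξ`
(iterated integral, first in `y`, then in `ξ`). -/
def OpW (h : ℝ) (a : ℝ → ℝ → ℂ) (v : ℝ → ℂ) : ℝ → ℂ := fun x =>
  ((2 * Real.pi * h : ℝ) : ℂ)⁻¹ * ∫ ξ : ℝ, ∫ y : ℝ,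
    Complex.exp (Complex.I * (((x - y) * ξ / h : ℝ) : ℂ)) * a ((x + y)/2) ξ * v y

/-- The norm `‖v‖_{W^{ρ,∞}_h} = ‖⟨hD⟩^ρ v‖_{L^∞}`. -/
def WhNorm (h r : ℝ) (f : ℝ → ℂ) : ℝ := LinfNorm (JBh h r f)

/-- The operator `ℒ = (1/h) Op_h^w(x+p'(ξ))`, i.e. `ℒv = h⁻¹(x v + p'(hD)v)`. -/
def Lcal (h : ℝ) (v : ℝ → ℂ) : ℝ → ℂ :=
  fun x => ((h : ℝ) : ℂ)⁻¹ * ((x : ℂ) * v x + FMul (fun ξ => ((pprime (h*ξ) : ℝ) : ℂ)) v x)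

open scoped LineDeriv SchwartzMap

abbrev S2 := SchwartzMap (ℝ × ℝ) ℂ

def D1 : S2 →L[ℂ] S2 := LineDeriv.lineDerivOpCLM ℂ S2 ((1:ℝ),(0:ℝ))
def D2 : S2 →L[ℂ] S2 := LineDeriv.lineDerivOpCLM ℂ S2 ((0:ℝ),(1:ℝ))
def Mx : S2 →L[ℂ] S2 := SchwartzMap.smulLeftCLM ℂ (fun p : ℝ × ℝ => (p.2 : ℂ))

lemma Mx_apply (b : S2) (p : ℝ × ℝ) : Mx b p = (p.2 : ℂ) * b p := by
  have : (fun p : ℝ × ℝ => (p.2 : ℂ)).HasTemperateGrowth :=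
    (Complex.ofRealCLM.comp (ContinuousLinearMap.snd ℝ ℝ ℝ)).hasTemperateGrowth
  simp [Mx, SchwartzMap.smulLeftCLM_apply_apply this]

lemma D1_fderiv (b : S2) (p : ℝ × ℝ) : D1 b p = fderiv ℝ b p (1,0) := rfl
lemma D2_fderiv (b : S2) (p : ℝ × ℝ) : D2 b p = fderiv ℝ b p (0,1) := rfl

lemma D1_hasDerivAt (b : S2) (x ξ : ℝ) :
    HasDerivAt (fun x' => b (x', ξ)) (D1 b (x, ξ)) x := by
  have h1 : HasFDerivAt b (fderiv ℝ b (x,ξ)) (x, ξ) := b.differentiableAt.hasFDerivAt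
  have h2 : HasDerivAt (fun x' : ℝ => (x', ξ)) ((1:ℝ),(0:ℝ)) x :=
    (hasDerivAt_id x).prodMk (hasDerivAt_const x ξ)
  exact h1.comp_hasDerivAt x h2

lemma D2_hasDerivAt (b : S2) (x ξ : ℝ) :
    HasDerivAt (fun ξ' => b (x, ξ')) (D2 b (x, ξ)) ξ := by
  have h1 : HasFDerivAt b (fderiv ℝ b (x,ξ)) (x, ξ) := b.differentiableAt.hasFDerivAt
  have h2 : HasDerivAt (fun x' : ℝ => (x, x')) ((0:ℝ),(1:ℝ)) ξ :=
    (hasDerivAt_const ξ x).prodMk (hasDerivAt_id ξ)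
  exact h1.comp_hasDerivAt ξ h2

lemma D1_Mx (b : S2) : D1 (Mx b) = Mx (D1 b) := by
  ext ⟨x, ξ⟩
  have h1 := D1_hasDerivAt (Mx b) x ξ
  have h2 := (D1_hasDerivAt b x ξ).const_mul (ξ : ℂ)
  simp only [Mx_apply] at h1 ⊢
  exact h1.unique h2

lemma D2_Mx (b : S2) : D2 (Mx b) = b + Mx (D2 b) := by
  ext ⟨x, ξ⟩
  have h1 := D2_hasDerivAt (Mx b) x ξ
  have h2 := ((hasDerivAt_id ξ).ofReal_comp).mul (D2_hasDerivAt b x ξ)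
  simp only [Mx_apply, _root_.add_apply] at h1 ⊢
  have := h1.unique h2
  simpa using this

lemma D1_D2 (b : S2) : D2 (D1 b) = D1 (D2 b) := by
  ext p
  have hd : DifferentiableAt ℝ (fderiv ℝ b) p :=
    ((b.smooth 2).fderiv_right (m := 1) (by norm_num)).differentiable (by norm_num) p
  have hs : IsSymmSndFDerivAt ℝ b p :=
    (b.smooth 2).contDiffAt.isSymmSndFDerivAt (by simp)
  rw [D2_fderiv, D1_fderiv]
  have e1 : (D1 b : ℝ × ℝ → ℂ) = fun p => fderiv ℝ b p (1,0) := rfl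
  have e2 : (D2 b : ℝ × ℝ → ℂ) = fun p => fderiv ℝ b p (0,1) := rfl
  rw [e1, e2, fderiv_clm_apply hd (by fun_prop), fderiv_clm_apply hd (by fun_prop)]
  simpa using hs.eq (0,1) (1,0)

lemma pd1_eq (b : S2) : pd1 (fun x ξ => b (x, ξ)) = fun x ξ => D1 b (x, ξ) := by
  funext x ξ
  exact (D1_hasDerivAt b x ξ).deriv

lemma pd2_eq (b : S2) : pd2 (fun x ξ => b (x, ξ)) = fun x ξ => D2 b (x, ξ) := by
  funext x ξ
  exact (D2_hasDerivAt b x ξ).deriv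

lemma pd1_iter (n : ℕ) (b : S2) :
    pd1^[n] (fun x ξ => b (x, ξ)) = fun x ξ => (D1^[n] b) (x, ξ) := by
  induction n generalizing b with
  | zero => rfl
  | succ n ih => rw [Function.iterate_succ_apply, Function.iterate_succ_apply, pd1_eq, ih]

lemma S2_decay (b : S2) : ∃ C : ℝ, 0 ≤ C ∧ ∀ x ξ : ℝ,
    ‖b (x, ξ)‖ ≤ C * ((1 + x^2)⁻¹ * (1 + ξ^2)⁻¹) := by
  have h := SchwartzMap.one_add_le_sup_seminorm_apply (𝕜 := ℝ) (m := (4,0)) (k := 4) (n := 0)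
    le_rfl le_rfl b
  refine ⟨_, le_trans (by positivity) (h 0), fun x ξ => ?_⟩
  have h1 := h (x, ξ)
  rw [norm_iteratedFDeriv_zero] at h1
  rw [← mul_inv, ← div_eq_mul_inv, le_div_iff₀ (by positivity)]
  refine le_trans ?_ h1
  rw [mul_comm]
  gcongr
  have hx : |x| ≤ ‖(x, ξ)‖ := le_max_left _ _
  have hξ : |ξ| ≤ ‖(x, ξ)‖ := le_max_right _ _
  set r := ‖(x,ξ)‖
  have hr : 0 ≤ r := norm_nonneg _
  have a1 : 1 + x^2 ≤ (1 + r)^2 := by nlinarith [sq_abs x, abs_nonneg x]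
  have a2 : 1 + ξ^2 ≤ (1 + r)^2 := by nlinarith [sq_abs ξ, abs_nonneg ξ]
  calc (1 + x^2) * (1 + ξ^2) ≤ (1+r)^2 * (1+r)^2 := by gcongr
    _ = _ := by ring

lemma S1_decay (v : SchwartzMap ℝ ℂ) : ∃ C : ℝ, 0 ≤ C ∧ ∀ y : ℝ,
    ‖v y‖ ≤ C * ((1 + y^2)⁻¹ * (1 + y^2)⁻¹) := by
  have h := SchwartzMap.one_add_le_sup_seminorm_apply (𝕜 := ℝ) (m := (4,0)) (k := 4) (n := 0)
    le_rfl le_rfl v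
  refine ⟨_, le_trans (by positivity) (h 0), fun x => ?_⟩
  have h1 := h x
  rw [norm_iteratedFDeriv_zero] at h1
  rw [← mul_inv, ← div_eq_mul_inv, le_div_iff₀ (by positivity)]
  refine le_trans ?_ h1
  rw [mul_comm]
  gcongr
  rw [Real.norm_eq_abs]
  have a1 : 1 + x^2 ≤ (1 + |x|)^2 := by nlinarith [sq_abs x, abs_nonneg x]
  calc (1 + x^2) * (1 + x^2) ≤ (1+|x|)^2 * (1+|x|)^2 := by gcongr
    _ = _ := by ring

/-- integrand -/
def Gk (h : ℝ) (b : S2) (v : SchwartzMap ℝ ℂ) (x : ℝ) (q : ℝ × ℝ) : ℂ :=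
  Complex.exp (Complex.I * (((x - q.2) * q.1 / h : ℝ) : ℂ)) * b ((x + q.2)/2, q.1) * v q.2

lemma norm_expI (t : ℝ) : ‖Complex.exp (Complex.I * (t : ℂ))‖ = 1 := by
  rw [mul_comm]; exact Complex.norm_exp_ofReal_mul_I t

lemma Gk_cont (h : ℝ) (b : S2) (v : SchwartzMap ℝ ℂ) (x : ℝ) : Continuous (Gk h b v x) := by
  unfold Gk
  have := b.continuous
  have := v.continuous
  fun_prop

lemma Gk_bound (h : ℝ) (b : S2) (v : SchwartzMap ℝ ℂ) : ∃ C : ℝ, 0 ≤ C ∧ ∀ (x : ℝ) (q : ℝ × ℝ),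
    ‖Gk h b v x q‖ ≤ C * (1 + x^2)⁻¹ * ((1 + q.1^2)⁻¹ * (1 + q.2^2)⁻¹) := by
  obtain ⟨C1, h1, H1⟩ := S2_decay b
  obtain ⟨C2, h2, H2⟩ := S1_decay v
  refine ⟨C1 * C2 * 8, by positivity, fun x q => ?_⟩
  obtain ⟨ξ, y⟩ := q
  simp only [Gk, norm_mul, norm_expI, one_mul]
  have hb := H1 ((x+y)/2) ξ
  have hv := H2 y
  have key : (1 + ((x+y)/2)^2)⁻¹ * (1 + y^2)⁻¹ ≤ 8 * (1 + x^2)⁻¹ := by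
    rw [← mul_inv, inv_eq_one_div, ← div_eq_mul_inv, div_le_div_iff₀ (by positivity) (by positivity)]
    nlinarith [sq_nonneg ((x+y)/2*y), sq_nonneg (x + 2*y), sq_nonneg ((x+y)/2), sq_nonneg (x+y-2*y), sq_nonneg y, sq_nonneg ((x+y) + y)]
  calc _ ≤ (C1 * ((1 + ((x+y)/2)^2)⁻¹ * (1 + ξ^2)⁻¹)) * (C2 * ((1 + y^2)⁻¹ * (1 + y^2)⁻¹)) := by
        gcongr
    _ = C1 * C2 * (1 + ξ^2)⁻¹ * (1 + y^2)⁻¹ * ((1 + ((x+y)/2)^2)⁻¹ * (1 + y^2)⁻¹) := by ring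
    _ ≤ C1 * C2 * (1 + ξ^2)⁻¹ * (1 + y^2)⁻¹ * (8 * (1 + x^2)⁻¹) := by gcongr
    _ = _ := by ring

lemma int_prod_inv : Integrable (fun q : ℝ × ℝ => (1 + q.1^2)⁻¹ * (1 + q.2^2)⁻¹) :=
  Integrable.mul_prod (f := fun x : ℝ => (1 + x^2)⁻¹) (g := fun x : ℝ => (1 + x^2)⁻¹)
    integrable_inv_one_add_sq integrable_inv_one_add_sq

lemma inv_le_one_aux (x : ℝ) : (1 + x^2)⁻¹ ≤ 1 := inv_le_one_of_one_le₀ (by nlinarith [sq_nonneg x])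

lemma Gk_bound2 (h : ℝ) (b : S2) (v : SchwartzMap ℝ ℂ) : ∃ C : ℝ, 0 ≤ C ∧ ∀ (x : ℝ) (q : ℝ × ℝ),
    ‖Gk h b v x q‖ ≤ C * ((1 + q.1^2)⁻¹ * (1 + q.2^2)⁻¹) := by
  obtain ⟨C, h0, H⟩ := Gk_bound h b v
  refine ⟨C, h0, fun x q => (H x q).trans ?_⟩
  gcongr
  exact mul_le_of_le_one_right h0 (inv_le_one_aux x)

lemma Gk_int (h : ℝ) (b : S2) (v : SchwartzMap ℝ ℂ) (x : ℝ) : Integrable (Gk h b v x) := by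
  obtain ⟨C, h0, H⟩ := Gk_bound2 h b v
  exact (int_prod_inv.const_mul C).mono' (Gk_cont h b v x).aestronglyMeasurable
    (Eventually.of_forall (H x))

def uop (h : ℝ) (b : S2) (v : SchwartzMap ℝ ℂ) (x : ℝ) : ℂ :=
  ((2 * Real.pi * h : ℝ) : ℂ)⁻¹ * ∫ q, Gk h b v x q

lemma uop_eq (h : ℝ) (b : S2) (v : SchwartzMap ℝ ℂ) :
    OpW h (fun x ξ => b (x, ξ)) (fun x => v x) = uop h b v := by
  funext x
  unfold OpW uop
  congr 1
  have := integral_prod _ (Gk_int h b v x)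
  exact this.symm

/-- `A = iξ + (h/2)∂_x` -/
def Aop (h : ℝ) : S2 →L[ℂ] S2 := Complex.I • Mx + ((h/2 : ℝ) : ℂ) • D1

lemma Aop_apply (h : ℝ) (b : S2) : Aop h b = Complex.I • Mx b + ((h/2 : ℝ) : ℂ) • D1 b := rfl

lemma Gk_deriv (h : ℝ) (hh : h ≠ 0) (b : S2) (v : SchwartzMap ℝ ℂ) (x : ℝ) (q : ℝ × ℝ) :
    HasDerivAt (fun x => Gk h b v x q) ((h : ℂ)⁻¹ * Gk h (Aop h b) v x q) x := by
  unfold Gk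
  have h1 : HasDerivAt (fun x : ℝ => (((x - q.2) * q.1 / h : ℝ) : ℂ)) ((1 * q.1 / h : ℝ) : ℂ) x :=
    (((hasDerivAt_id x).sub_const q.2).mul_const q.1 |>.div_const h).ofReal_comp
  have h2 := (h1.const_mul Complex.I).cexp
  have h3 : HasDerivAt (fun x : ℝ => b ((x + q.2)/2, q.1)) (((1/2:ℝ)) • D1 b ((x + q.2)/2, q.1)) x := by
    have := HasDerivAt.scomp x (D1_hasDerivAt b ((x+q.2)/2) q.1)
      (((hasDerivAt_id x).add_const q.2).div_const 2)
    exact this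
  have h4 := (h2.mul h3).mul_const (v q.2)
  refine HasDerivAt.congr_deriv h4 ?_
  rw [Aop_apply]
  simp only [_root_.add_apply, _root_.smul_apply, Mx_apply, smul_eq_mul, Complex.real_smul]
  have : (h : ℂ) ≠ 0 := by exact_mod_cast hh
  push_cast
  field_simp

lemma uop_deriv (h : ℝ) (hh : h ≠ 0) (b : S2) (v : SchwartzMap ℝ ℂ) (x : ℝ) :
    HasDerivAt (uop h b v) ((h : ℂ)⁻¹ * uop h (Aop h b) v x) x := by
  obtain ⟨C, h0, H⟩ := Gk_bound2 h (Aop h b) v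
  have := (hasDerivAt_integral_of_dominated_loc_of_deriv_le (μ := volume) (s := Set.univ)
    (F := Gk h b v) (F' := fun x q => (h : ℂ)⁻¹ * Gk h (Aop h b) v x q) (x₀ := x)
    (bound := fun q => ‖(h:ℂ)⁻¹‖ * (C * ((1 + q.1^2)⁻¹ * (1 + q.2^2)⁻¹)))
    Filter.univ_mem
    (Eventually.of_forall fun x => (Gk_cont h b v x).aestronglyMeasurable)
    (Gk_int h b v x)
    ((Gk_int h (Aop h b) v x).const_mul _).aestronglyMeasurable
    (Eventually.of_forall fun q x _ => by rw [norm_mul]; gcongr; exact H x q)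
    ((int_prod_inv.const_mul C).const_mul _)
    (Eventually.of_forall fun q x _ => Gk_deriv h hh b v x q)).2
  have h2 := this.const_mul ((2 * Real.pi * h : ℝ) : ℂ)⁻¹
  refine HasDerivAt.congr_deriv h2 ?_
  rw [integral_const_mul]
  unfold uop
  ring

lemma uop_int (h : ℝ) (hh : h ≠ 0) (b : S2) (v : SchwartzMap ℝ ℂ) : Integrable (uop h b v) := by
  obtain ⟨C, h0, H⟩ := Gk_bound h b v
  have hc : Continuous (uop h b v) :=
    continuous_iff_continuousAt.2 fun x => (uop_deriv h hh b v x).continuousAt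
  refine (integrable_inv_one_add_sq.const_mul
    (‖((2 * Real.pi * h : ℝ) : ℂ)⁻¹‖ * C * ∫ q : ℝ × ℝ, ((1 + q.1^2)⁻¹ * (1 + q.2^2)⁻¹))).mono'
    hc.aestronglyMeasurable (Eventually.of_forall fun x => ?_)
  unfold uop
  rw [norm_mul]
  calc _ ≤ ‖((2 * Real.pi * h : ℝ) : ℂ)⁻¹‖ *
        ∫ q : ℝ × ℝ, C * (1 + x^2)⁻¹ * ((1 + q.1^2)⁻¹ * (1 + q.2^2)⁻¹) := by
        gcongr
        exact norm_integral_le_of_norm_le (int_prod_inv.const_mul _) (Eventually.of_forall (H x))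
    _ = _ := by rw [integral_const_mul]; ring

/-- `Q = 1 - A²/(4π²)` -/
def Qop (h : ℝ) (b : S2) : S2 := b - ((((2*Real.pi)^2)⁻¹ : ℝ) : ℂ) • Aop h (Aop h b)

lemma uop_Q (h : ℝ) (b : S2) (v : SchwartzMap ℝ ℂ) (x : ℝ) :
    uop h (Qop h b) v x = uop h b v x -
      ((((2*Real.pi)^2)⁻¹ : ℝ) : ℂ) * uop h (Aop h (Aop h b)) v x := by
  unfold uop
  have : Gk h (Qop h b) v x = fun q => Gk h b v x q -
      ((((2*Real.pi)^2)⁻¹ : ℝ) : ℂ) * Gk h (Aop h (Aop h b)) v x q := by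
    funext q
    simp only [Gk, Qop, _root_.sub_apply, _root_.smul_apply, smul_eq_mul]
    ring
  rw [this, integral_sub (Gk_int _ _ _ _) ((Gk_int _ _ _ _).const_mul _), integral_const_mul]
  ring

lemma FT_A (h : ℝ) (hh : h ≠ 0) (b : S2) (v : SchwartzMap ℝ ℂ) (ξ : ℝ) :
    FT (uop h (Aop h b) v) ξ = (2 * Real.pi * Complex.I * (h * ξ)) * FT (uop h b v) ξ := by
  have hd : deriv (uop h b v) = fun x => (h : ℂ)⁻¹ * uop h (Aop h b) v x :=
    funext fun x => (uop_deriv h hh b v x).deriv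
  have hc : (h : ℂ) ≠ 0 := by exact_mod_cast hh
  have h1 := Real.fourier_deriv (uop_int h hh b v)
    (fun x => (uop_deriv h hh b v x).differentiableAt)
    (by rw [hd]; exact (uop_int h hh _ v).const_mul _) 
  have h2 := congrFun h1 ξ
  rw [hd] at h2
  unfold FT
  have h3 : FourierTransform.fourier (fun x => (h : ℂ)⁻¹ * uop h (Aop h b) v x) ξ
      = (h:ℂ)⁻¹ * FourierTransform.fourier (uop h (Aop h b) v) ξ := by
    simp only [Real.fourier_real_eq_integral_exp_smul, smul_eq_mul]
    rw [← integral_const_mul]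
    congr 1; funext x; ring
  rw [h3] at h2
  rw [smul_eq_mul] at h2
  field_simp at h2
  rw [h2]; ring

lemma FT_Q (h : ℝ) (hh : h ≠ 0) (b : S2) (v : SchwartzMap ℝ ℂ) (ξ : ℝ) :
    FT (uop h (Qop h b) v) ξ = ((1 + (h * ξ)^2 : ℝ) : ℂ) * FT (uop h b v) ξ := by
  have e : uop h (Qop h b) v = fun x => uop h b v x -
      ((((2*Real.pi)^2)⁻¹ : ℝ) : ℂ) * uop h (Aop h (Aop h b)) v x := funext (uop_Q h b v)
  have h3 : FT (uop h (Qop h b) v) ξ = FT (uop h b v) ξ -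
      ((((2*Real.pi)^2)⁻¹ : ℝ) : ℂ) * FT (uop h (Aop h (Aop h b)) v) ξ := by
    rw [e]
    unfold FT
    simp only [Real.fourier_eq, smul_eq_mul, Circle.smul_def]
    rw [← integral_const_mul, ← integral_sub]
    · congr 1; funext x; ring
    · exact (Real.fourierIntegral_convergent_iff ξ).2 (uop_int h hh b v)
    · exact ((Real.fourierIntegral_convergent_iff ξ).2 (uop_int h hh _ v)).const_mul _
  rw [h3, FT_A h hh, FT_A h hh]
  have : (Real.pi : ℂ) ≠ 0 := by exact_mod_cast Real.pi_ne_zero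
  push_cast
  field_simp
  ring_nf
  simp

lemma FT_Q_iter (h : ℝ) (hh : h ≠ 0) (m : ℕ) (b : S2) (v : SchwartzMap ℝ ℂ) (ξ : ℝ) :
    FT (uop h ((Qop h)^[m] b) v) ξ = ((1 + (h * ξ)^2 : ℝ) : ℂ)^m * FT (uop h b v) ξ := by
  induction m with
  | zero => simp
  | succ n ih => rw [Function.iterate_succ_apply', FT_Q h hh, ih]; ring
lemma rp_le (r η : ℝ) (hr : 1 ≤ r) : (1 + η^2)^(-r) ≤ (1 + η^2)⁻¹ := by
  rw [← Real.rpow_neg_one]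
  exact Real.rpow_le_rpow_of_exponent_le (by nlinarith [sq_nonneg η]) (by linarith)

lemma rp_deriv (r η : ℝ) : HasDerivAt (fun η : ℝ => (1 + η^2)^(-r))
    (-(2 * r) * (η * (1 + η^2)^(-(r+1)))) η := by
  have h1 : HasDerivAt (fun η : ℝ => 1 + η^2) (2 * η) η := by
    simpa using (hasDerivAt_pow 2 η).const_add 1
  have := h1.rpow_const (p := -r) (Or.inl (by positivity))
  refine this.congr_deriv ?_
  rw [show -r - 1 = -(r+1) by ring]; ring

lemma rp_deriv2 (r η : ℝ) : HasDerivAt (fun η : ℝ => -(2 * r) * (η * (1 + η^2)^(-(r+1))))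
    (-(2 * r) * ((1 + η^2)^(-(r+1)) - 2 * (r+1) * (η^2 * (1 + η^2)^(-(r+2))))) η := by
  have := ((hasDerivAt_id η).mul (rp_deriv (r+1) η)).const_mul (-(2*r))
  refine this.congr_deriv ?_
  rw [show r + 1 + 1 = r + 2 by ring]
  simp only [id]
  ring

lemma rp_mul (r η : ℝ) : (1 + η^2) * (1 + η^2)^(-(r+1)) = (1 + η^2)^(-r) := by
  rw [show -r = 1 + (-(r+1)) by ring, Real.rpow_add (by positivity), Real.rpow_one]

def gr (r η : ℝ) : ℂ := (((1 + η^2)^(-r) : ℝ) : ℂ)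

lemma gr_int (r : ℝ) (hr : 1 ≤ r) : Integrable (gr r) := by
  refine integrable_inv_one_add_sq.mono' ?_ (Eventually.of_forall fun η => ?_)
  · have : Continuous (gr r) := continuous_iff_continuousAt.2 fun x =>
      (rp_deriv r x).ofReal_comp.continuousAt
    exact this.aestronglyMeasurable
  · rw [gr, Complex.norm_real, Real.norm_of_nonneg (by positivity)]
    exact rp_le r η hr

lemma gr_decay (r : ℝ) (hr : 1 ≤ r) : ∃ C : ℝ, 0 ≤ C ∧ ∀ z : ℝ,
    ‖FourierTransform.fourier (gr r) z‖ ≤ C * (1 + z^2)⁻¹ := by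
  have d1 : deriv (gr r) = fun η => ((-(2 * r) * (η * (1 + η^2)^(-(r+1))) : ℝ) : ℂ) :=
    funext fun η => (rp_deriv r η).ofReal_comp.deriv
  have d2 : deriv (deriv (gr r)) = fun η => ((-(2 * r) * ((1 + η^2)^(-(r+1)) - 2 * (r+1) * (η^2 * (1 + η^2)^(-(r+2)))) : ℝ) : ℂ) := by
    rw [d1]
    exact funext fun η => (rp_deriv2 r η).ofReal_comp.deriv
  have df1 : Differentiable ℝ (gr r) := fun η => (rp_deriv r η).ofReal_comp.differentiableAt
  have df2 : Differentiable ℝ (deriv (gr r)) := by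
    rw [d1]; exact fun η => (rp_deriv2 r η).ofReal_comp.differentiableAt
  have i1 : Integrable (deriv (gr r)) := by
    refine (integrable_inv_one_add_sq.const_mul (2*r)).mono' df2.continuous.aestronglyMeasurable
      (Eventually.of_forall fun η => ?_)
    rw [d1]
    simp only [Complex.norm_real, norm_mul, norm_neg, Real.norm_eq_abs, abs_two]
    rw [abs_of_pos (by linarith : 0 < r), abs_of_nonneg (by positivity : 0 ≤ (1 + η^2)^(-(r+1)))]
    gcongr
    refine le_trans ?_ (rp_le r η hr)
    rw [← rp_mul r]
    gcongr
    nlinarith [sq_nonneg (|η| - 1), sq_abs η]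
  have i2 : Integrable (deriv (deriv (gr r))) := by
    refine (integrable_inv_one_add_sq.const_mul (2*r*(1 + 2*(r+1)))).mono' ?_
      (Eventually.of_forall fun η => ?_)
    · exact (measurable_deriv _).aestronglyMeasurable
    rw [d2]
    simp only [Complex.norm_real]
    rw [norm_mul, norm_neg, Real.norm_of_nonneg (by linarith : 0 ≤ 2 * r), mul_assoc (2*r)]
    refine mul_le_mul_of_nonneg_left ?_ (by linarith)
    have e1 := rp_le (r+1) η (by linarith)
    have e2 : η^2 * (1 + η^2)^(-(r+2)) ≤ (1 + η^2)⁻¹ := by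
      refine le_trans ?_ e1
      rw [← rp_mul (r+1), show r + 1 + 1 = r + 2 by ring]
      gcongr
      linarith
    have p1 : 0 ≤ (1 + η^2)^(-(r+1)) := by positivity
    have p2 : 0 ≤ η^2 * (1 + η^2)^(-(r+2)) := by positivity
    rw [Real.norm_eq_abs, abs_le]
    constructor <;> nlinarith
  have f1 := Real.fourier_deriv (gr_int r hr) df1 i1
  have f2 := Real.fourier_deriv i1 df2 i2
  have nle : ∀ (f : ℝ → ℂ) (z : ℝ), ‖FourierTransform.fourier f z‖ ≤ ∫ v, ‖f v‖ := fun f z =>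
    VectorFourier.norm_fourierIntegral_le_integral_norm _ _ _ f z
  have hC : 0 ≤ (∫ v, ‖gr r v‖) + ∫ v, ‖deriv (deriv (gr r)) v‖ :=
    add_nonneg (integral_nonneg fun _ => norm_nonneg _) (integral_nonneg fun _ => norm_nonneg _)
  refine ⟨_, hC, fun z => ?_⟩
  rw [← div_eq_mul_inv, le_div_iff₀ (by positivity)]
  have n1 := nle (gr r) z
  have n2 := nle (deriv (deriv (gr r))) z
  rw [f2, f1] at n2
  simp only [smul_eq_mul, norm_mul, Complex.norm_I, Complex.norm_real, Complex.norm_ofNat, mul_one,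
    Real.norm_eq_abs, abs_of_pos Real.pi_pos] at n2
  have hz : z^2 ≤ (2 * Real.pi * |z|) * (2 * Real.pi * |z|) := by
    have : (2 * Real.pi * |z|) * (2 * Real.pi * |z|) = (2*Real.pi)^2 * z^2 := by
      rw [← sq_abs z]; ring
    rw [this]
    have : 1 ≤ (2*Real.pi)^2 := by nlinarith [Real.pi_gt_three]
    nlinarith [sq_nonneg z]
  have := mul_le_mul_of_nonneg_right hz (norm_nonneg (FourierTransform.fourier (gr r) z))
  nlinarith

lemma mult_bound (r : ℝ) (hr : 1 ≤ r) : ∃ C : ℝ, 0 ≤ C ∧ ∀ h : ℝ, 0 < h → ∀ w : ℝ → ℂ,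
    Integrable w → ∀ B : ℝ, (∀ z, ‖w z‖ ≤ B) → ∀ x : ℝ,
    ‖FTinv (fun ξ => gr r (h * ξ) * FT w ξ) x‖ ≤ C * B := by
  obtain ⟨C, hC, H⟩ := gr_decay r hr
  refine ⟨C * Real.pi, by positivity, fun h hh w hw B hB x => ?_⟩
  set φ : ℝ → ℂ := fun ξ => Complex.exp (((2 * Real.pi * (ξ * x) : ℝ) : ℂ) * Complex.I) * gr r (h * ξ) with hφ
  have hφi : Integrable φ := by
    have := (gr_int r hr).comp_mul_left' hh.ne'
    refine this.bdd_mul (c := 1) (Continuous.aestronglyMeasurable (by fun_prop)) (Eventually.of_forall fun ξ => ?_)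
    rw [Complex.norm_exp_ofReal_mul_I]
  have e1 : FTinv (fun ξ => gr r (h * ξ) * FT w ξ) x = ∫ ξ, FT w ξ • φ ξ := by
    unfold FTinv
    rw [Real.fourierInv_eq']
    congr 1; funext ξ
    simp only [hφ, smul_eq_mul, RCLike.inner_apply, conj_trivial]
    rw [mul_comm x ξ]
    ring
  have e2 : ∫ ξ, FT w ξ • φ ξ = ∫ z, w z • FourierTransform.fourier φ z := by
    have := VectorFourier.integral_fourierIntegral_smul_eq_flip (μ := volume) (ν := volume)
      (L := innerₗ ℝ) Real.continuous_fourierChar continuous_inner hw hφi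
    rw [flip_innerₗ] at this
    exact this
  have e3 : ∀ z, FourierTransform.fourier φ z = (|h⁻¹| : ℝ) • FourierTransform.fourier (gr r) ((z - x)/h) := by
    intro z
    rw [Real.fourier_real_eq_integral_exp_smul, Real.fourier_real_eq_integral_exp_smul,
      ← Measure.integral_comp_mul_left]
    congr 1; funext ξ
    simp only [hφ, smul_eq_mul]
    rw [← mul_assoc, ← Complex.exp_add]
    congr 2
    have : (h : ℂ) ≠ 0 := by exact_mod_cast hh.ne'
    push_cast
    field_simp
    ring
  have hB0 : 0 ≤ B := (norm_nonneg _).trans (hB 0)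
  have i4 : Integrable (fun z : ℝ => (1 + ((z - x)/h)^2)⁻¹) :=
    (integrable_inv_one_add_sq.comp_div hh.ne').comp_sub_right x
  rw [e1, e2]
  calc ‖∫ z, w z • FourierTransform.fourier φ z‖ ≤ ∫ z, B * (h⁻¹ * (C * (1 + ((z - x)/h)^2)⁻¹)) := by
        refine norm_integral_le_of_norm_le (((i4.const_mul C).const_mul _).const_mul _) (Eventually.of_forall fun z => ?_)
        rw [norm_smul, e3, norm_smul, Real.norm_eq_abs, abs_abs, abs_of_pos (inv_pos.2 hh)]
        gcongr
        · exact hB z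
        · exact H _
    _ = B * (h⁻¹ * (C * ∫ z : ℝ, (1 + ((z - x)/h)^2)⁻¹)) := by
        rw [integral_const_mul, integral_const_mul, integral_const_mul]
    _ = C * Real.pi * B := by
        rw [integral_sub_right_eq_self (fun z => (1 + (z/h)^2)⁻¹) x,
          Measure.integral_comp_div (fun z => (1 + z^2)⁻¹) h, integral_univ_inv_one_add_sq,
          abs_of_pos hh, smul_eq_mul]
        field_simp
def lam (β h ξ : ℝ) : ℝ := 1 + β * h ^ β * |ξ|

def wt (β h s : ℝ) (N : ℕ) (x ξ : ℝ) : ℝ :=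
  h ^ (-(s * β)) * (jap ((x + pprime ξ) / Real.sqrt h) ^ (-(1:ℝ)) * lam β h ξ ^ (-(N:ℝ)))

lemma lam_one_le {β h ξ : ℝ} (hβ : 0 < β) (hh : 0 < h) : 1 ≤ lam β h ξ := by
  unfold lam
  have : 0 ≤ β * h^β * |ξ| := by positivity
  linarith

lemma jap_pos (z : ℝ) : 0 < jap z := by unfold jap; positivity

lemma wt_nonneg {β h s : ℝ} (hβ : 0 < β) (hh : 0 < h) (N : ℕ) (x ξ : ℝ) : 0 ≤ wt β h s N x ξ := by
  unfold wt
  have := lam_one_le (ξ := ξ) hβ hh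
  have := jap_pos ((x + pprime ξ) / Real.sqrt h)
  have : 0 ≤ lam β h ξ := by linarith
  positivity

lemma wt_mono {β h s s' : ℝ} (hβ : 0 < β) (hh : 0 < h) (hh1 : h ≤ 1) (hs : s ≤ s') (N : ℕ) (x ξ : ℝ) :
    wt β h s N x ξ ≤ wt β h s' N x ξ := by
  unfold wt
  have := lam_one_le (ξ := ξ) hβ hh
  have := jap_pos ((x + pprime ξ) / Real.sqrt h)
  have : 0 ≤ lam β h ξ := by linarith
  refine mul_le_mul_of_nonneg_right ?_ (by positivity)
  exact Real.rpow_le_rpow_of_exponent_ge hh hh1 (by nlinarith)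

lemma wt_xi {β h s : ℝ} (hβ : 0 < β) (hh : 0 < h) (N : ℕ) (x ξ : ℝ) :
    |ξ| * wt β h s (N+1) x ξ ≤ β⁻¹ * wt β h (s+1) N x ξ := by
  unfold wt
  have h1 := lam_one_le (ξ := ξ) hβ hh
  have := jap_pos ((x + pprime ξ) / Real.sqrt h)
  have h0 : 0 < lam β h ξ := by linarith
  have e1 : lam β h ξ ^ (-((N+1 : ℕ):ℝ)) = lam β h ξ ^ (-(N:ℝ)) * (lam β h ξ)⁻¹ := by
    rw [← Real.rpow_neg_one, ← Real.rpow_add h0]; push_cast; congr 1; ring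
  have e2 : h ^ (-((s+1) * β)) = h ^ (-(s*β)) * (h^β)⁻¹ := by
    rw [← Real.rpow_neg hh.le, ← Real.rpow_add hh]; congr 1; ring
  rw [e1, e2]
  set J := jap ((x + pprime ξ) / Real.sqrt h) ^ (-(1:ℝ))
  have hJ : 0 ≤ J := by positivity
  have hb : 0 < h^β := by positivity
  have key : |ξ| * (lam β h ξ)⁻¹ ≤ β⁻¹ * (h^β)⁻¹ := by
    rw [← mul_inv, ← div_eq_mul_inv, div_le_iff₀ h0, inv_mul_eq_div, le_div_iff₀ (by positivity)]
    unfold lam; linarith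
  calc _ = (h ^ (-(s*β)) * (J * lam β h ξ ^ (-(N:ℝ)))) * (|ξ| * (lam β h ξ)⁻¹) := by ring
    _ ≤ (h ^ (-(s*β)) * (J * lam β h ξ ^ (-(N:ℝ)))) * (β⁻¹ * (h^β)⁻¹) := by gcongr
    _ = _ := by ring

def Good (β h s : ℝ) (C : ℕ → ℕ → ℝ) (b : S2) : Prop :=
  ∀ α N : ℕ, ∀ x ξ : ℝ,
    h^α * ‖(D1^[α] b) (x, ξ)‖ ≤ C α N * wt β h s N x ξ ∧
    h^α * (Real.sqrt h * ‖(D1^[α] (D2 b)) (x, ξ)‖) ≤ C α N * wt β h s N x ξ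

lemma D1_A (h : ℝ) (b : S2) : D1 (Aop h b) = Aop h (D1 b) := by
  simp only [Aop_apply, map_add, map_smul, D1_Mx]

lemma D1_iter_A (h : ℝ) (n : ℕ) (b : S2) : D1^[n] (Aop h b) = Aop h (D1^[n] b) := by
  induction n generalizing b with
  | zero => rfl
  | succ n ih => rw [Function.iterate_succ_apply, Function.iterate_succ_apply, D1_A, ih]

lemma D2_A (h : ℝ) (b : S2) : D2 (Aop h b) = Complex.I • b + Aop h (D2 b) := by
  simp only [Aop_apply, map_add, map_smul, D2_Mx, D1_D2, smul_add, add_assoc]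

lemma D1_iter_add (n : ℕ) (b c : S2) : D1^[n] (b + c) = D1^[n] b + D1^[n] c :=
  iterate_map_add D1 n b c

lemma D1_iter_smul (n : ℕ) (k : ℂ) (b : S2) : D1^[n] (k • b) = k • D1^[n] b := by
  induction n generalizing b with
  | zero => rfl
  | succ n ih => rw [Function.iterate_succ_apply, Function.iterate_succ_apply, map_smul, ih]

lemma norm_A_le (h : ℝ) (hh : 0 < h) (b : S2) (α : ℕ) (x ξ : ℝ) :
    h^α * ‖(Aop h b) (x, ξ)‖ ≤ |ξ| * (h^α * ‖b (x, ξ)‖) + h^(α+1) * ‖(D1 b) (x, ξ)‖ := by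
  have : ‖(Aop h b) (x, ξ)‖ ≤ |ξ| * ‖b (x, ξ)‖ + h * ‖D1 b (x, ξ)‖ := by
    rw [Aop_apply, _root_.add_apply, _root_.smul_apply, _root_.smul_apply, Mx_apply]
    refine (norm_add_le _ _).trans ?_
    simp only [smul_eq_mul, norm_mul, Complex.norm_I, one_mul, Complex.norm_real, Real.norm_eq_abs]
    rw [abs_of_pos (by positivity : 0 < h/2)]
    gcongr
    linarith
  calc _ ≤ h^α * (|ξ| * ‖b (x, ξ)‖ + h * ‖D1 b (x, ξ)‖) := by gcongr
    _ = _ := by ring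

def CA (β : ℝ) (C : ℕ → ℕ → ℝ) : ℕ → ℕ → ℝ := fun α N =>
  β⁻¹ * C α (N+1) + C (α+1) N + C α N

lemma Good_A {β h s : ℝ} (hβ : 0 < β) (hh : 0 < h) (hh1 : h ≤ 1) {C : ℕ → ℕ → ℝ}
    (hC : ∀ α N, 0 ≤ C α N) {b : S2} (hb : Good β h s C b) :
    Good β h (s+1) (CA β C) (Aop h b) := by
  intro α N x ξ
  have b1 := hb α (N+1) x ξ
  have b2 := hb (α+1) N x ξ
  have b3 := hb α N x ξ
  have m := wt_mono hβ hh hh1 (by linarith : s ≤ s+1) N x ξ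
  have wx := wt_xi (s := s) hβ hh N x ξ
  have c1 := mul_le_mul_of_nonneg_left m (hC (α+1) N)
  have c2 := mul_le_mul_of_nonneg_left m (hC α N)
  have c3 := mul_le_mul_of_nonneg_left wx (hC α (N+1))
  have w0 := wt_nonneg (s := s+1) hβ hh N x ξ
  have c4 : 0 ≤ C α N * wt β h (s+1) N x ξ := mul_nonneg (hC _ _) w0
  have hs1 : Real.sqrt h ≤ 1 := Real.sqrt_le_one.2 hh1
  have hs0 := Real.sqrt_nonneg h
  unfold CA
  constructor
  · rw [D1_iter_A]
    have n1 := norm_A_le h hh (D1^[α] b) α x ξ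
    have d1 := mul_le_mul_of_nonneg_left b1.1 (abs_nonneg ξ)
    rw [Function.iterate_succ_apply'] at b2
    linarith [b2.1]
  · rw [D2_A, D1_iter_add, D1_iter_smul, D1_iter_A]
    have n1 := norm_A_le h hh (D1^[α] (D2 b)) α x ξ
    have d1 := mul_le_mul_of_nonneg_left b1.2 (abs_nonneg ξ)
    rw [Function.iterate_succ_apply', Function.iterate_succ_apply'] at b2
    have tri : ‖(Complex.I • D1^[α] b + Aop h (D1^[α] (D2 b))) (x, ξ)‖ ≤
        ‖(D1^[α] b) (x, ξ)‖ + ‖(Aop h (D1^[α] (D2 b))) (x, ξ)‖ := by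
      rw [_root_.add_apply, _root_.smul_apply]
      refine (norm_add_le _ _).trans ?_
      simp
    have t1 : h^α * (Real.sqrt h * ‖(Complex.I • D1^[α] b + Aop h (D1^[α] (D2 b))) (x, ξ)‖)
        ≤ h^α * (Real.sqrt h * (‖(D1^[α] b) (x, ξ)‖ + ‖(Aop h (D1^[α] (D2 b))) (x, ξ)‖)) := by gcongr
    have t2 : Real.sqrt h * (h^α * ‖(D1^[α] b) (x, ξ)‖) ≤ 1 * (h^α * ‖(D1^[α] b) (x, ξ)‖) := by
      gcongr
    have t3 := mul_le_mul_of_nonneg_left n1 hs0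
    linarith [b2.2, b3.1]

lemma Good_sub {β h s s' : ℝ} (hβ : 0 < β) (hh : 0 < h) (hh1 : h ≤ 1) (hs : s ≤ s') {C C' : ℕ → ℕ → ℝ}
    (hC : ∀ α N, 0 ≤ C α N) {b b' : S2} (hb : Good β h s C b) (hb' : Good β h s' C' b')
    (k : ℂ) (hk : ‖k‖ ≤ 1) :
    Good β h s' (fun α N => C α N + C' α N) (b - k • b') := by
  intro α N x ξ
  have b1 := hb α N x ξ
  have b2 := hb' α N x ξ
  have m := mul_le_mul_of_nonneg_left (wt_mono hβ hh hh1 hs N x ξ) (hC α N)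
  have e : b - k • b' = b + (-k) • b' := by rw [neg_smul, sub_eq_add_neg]
  have tri : ∀ c c' : S2, ‖(c + (-k) • c') (x, ξ)‖ ≤ ‖c (x, ξ)‖ + ‖c' (x, ξ)‖ := by
    intro c c'
    rw [_root_.add_apply, _root_.smul_apply]
    refine (norm_add_le _ _).trans ?_
    rw [norm_smul, norm_neg]
    gcongr
    exact mul_le_of_le_one_left (norm_nonneg _) hk
  have hs0 := Real.sqrt_nonneg h
  rw [e, map_add, map_smul, D1_iter_add, D1_iter_smul, D1_iter_add, D1_iter_smul]
  constructor
  · have := mul_le_mul_of_nonneg_left (tri (D1^[α] b) (D1^[α] b')) (by positivity : 0 ≤ h^α)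
    linarith [b1.1, b2.1]
  · have := mul_le_mul_of_nonneg_left (tri (D1^[α] (D2 b)) (D1^[α] (D2 b')))
      (by positivity : 0 ≤ h^α * Real.sqrt h)
    linarith [b1.2, b2.2]

lemma CA_nonneg {β : ℝ} (hβ : 0 < β) {C : ℕ → ℕ → ℝ} (hC : ∀ α N, 0 ≤ C α N) (α N : ℕ) :
    0 ≤ CA β C α N := by
  unfold CA
  have := hC α (N+1)
  have := hC (α+1) N
  have := hC α N
  positivity

def CQ (β : ℝ) (C : ℕ → ℕ → ℝ) : ℕ → ℕ → ℝ := fun α N => C α N + CA β (CA β C) α N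

lemma CQ_nonneg {β : ℝ} (hβ : 0 < β) {C : ℕ → ℕ → ℝ} (hC : ∀ α N, 0 ≤ C α N) (α N : ℕ) :
    0 ≤ CQ β C α N :=
  add_nonneg (hC _ _) (CA_nonneg hβ (CA_nonneg hβ hC) _ _)

lemma Good_Q {β h s : ℝ} (hβ : 0 < β) (hh : 0 < h) (hh1 : h ≤ 1) {C : ℕ → ℕ → ℝ}
    (hC : ∀ α N, 0 ≤ C α N) {b : S2} (hb : Good β h s C b) :
    Good β h (s+2) (CQ β C) (Qop h b) := by
  have h1 := Good_A hβ hh hh1 (CA_nonneg hβ hC) (Good_A hβ hh hh1 hC hb)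
  rw [show s + 1 + 1 = s + 2 by ring] at h1
  refine Good_sub hβ hh hh1 (by linarith) hC hb h1 _ ?_
  rw [Complex.norm_real, Real.norm_of_nonneg (by positivity)]
  exact inv_le_one_of_one_le₀ (by nlinarith [Real.pi_gt_three])

lemma CQ_iter_nonneg {β : ℝ} (hβ : 0 < β) (m : ℕ) {C : ℕ → ℕ → ℝ} (hC : ∀ α N, 0 ≤ C α N) (α N : ℕ) :
    0 ≤ (CQ β)^[m] C α N := by
  induction m generalizing C with
  | zero => exact hC _ _
  | succ n ih => rw [Function.iterate_succ_apply]; exact ih (CQ_nonneg hβ hC)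

lemma Good_Q_iter {β h s : ℝ} (hβ : 0 < β) (hh : 0 < h) (hh1 : h ≤ 1) (m : ℕ) {C : ℕ → ℕ → ℝ}
    (hC : ∀ α N, 0 ≤ C α N) {b : S2} (hb : Good β h s C b) :
    Good β h (s+2*m) ((CQ β)^[m] C) ((Qop h)^[m] b) := by
  induction m with
  | zero => simpa using hb
  | succ n ih =>
    rw [Function.iterate_succ_apply', Function.iterate_succ_apply']
    have := Good_Q hβ hh hh1 (CQ_iter_nonneg hβ n hC) ih
    convert this using 1
    push_cast; ring

lemma Good_init {δ β h : ℝ} (hδ : δ ∈ Set.Icc (0:ℝ) (1/2)) (hβ : 0 < β) (hh : 0 < h) (hh1 : h ≤ 1)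
    {Cc : ℕ → ℕ → ℕ → ℝ} {a : ℝ → ℝ → ℝ → ℂ}
    (ha : SymBound δ β
              (fun h x ξ => jap ((x + pprime ξ) / Real.sqrt h) ^ (-(1:ℝ))) Cc a)
    {b : S2} (hb : a h = fun x ξ => b (x, ξ)) :
    Good β h 0 (fun α N => |Cc α 0 N| + |Cc α 1 N|) b := by
  intro α N x ξ
  have h1 := ha α 0 N h ⟨hh, hh1⟩ x ξ
  have h2 := ha α 1 N h ⟨hh, hh1⟩ x ξ
  simp only [Function.iterate_zero, Function.iterate_one, id, hb, pd2_eq, pd1_iter] at h1 h2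
  have w0 := wt_nonneg (s := 0) hβ hh N x ξ
  have e : wt β h 0 N x ξ = jap ((x + pprime ξ) / Real.sqrt h) ^ (-(1:ℝ)) * (1 + β * h ^ β * |ξ|) ^ (-(N:ℝ)) := by
    simp [wt, lam]
  have p1 : 0 ≤ h ^ (-(δ * ((α : ℝ) + ((0:ℕ) : ℝ)))) := by positivity
  have p2 : 0 ≤ h ^ (-(δ * ((α : ℝ) + ((1:ℕ) : ℝ)))) := by positivity
  have q1 : h^α * h ^ (-(δ * ((α : ℝ) + ((0:ℕ) : ℝ)))) ≤ 1 := by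
    rw [← Real.rpow_natCast, ← Real.rpow_add hh]
    refine Real.rpow_le_one hh.le hh1 ?_
    have := hδ.2
    push_cast
    have : (0:ℝ) ≤ α := by positivity
    nlinarith
  have q2 : h^α * (Real.sqrt h * h ^ (-(δ * ((α : ℝ) + ((1:ℕ) : ℝ))))) ≤ 1 := by
    rw [← Real.rpow_natCast, Real.sqrt_eq_rpow, ← Real.rpow_add hh, ← Real.rpow_add hh]
    refine Real.rpow_le_one hh.le hh1 ?_
    have := hδ.2
    push_cast
    have : (0:ℝ) ≤ α := by positivity
    nlinarith
  constructor
  · calc _ ≤ h^α * (Cc α 0 N * wt β h 0 N x ξ * h ^ (-(δ * ((α : ℝ) + ((0:ℕ) : ℝ))))) := by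
          gcongr
          rw [e]; linarith
      _ ≤ h^α * (|Cc α 0 N| * wt β h 0 N x ξ * h ^ (-(δ * ((α : ℝ) + ((0:ℕ) : ℝ))))) := by
          gcongr; exact le_abs_self _
      _ = (h^α * h ^ (-(δ * ((α : ℝ) + ((0:ℕ) : ℝ))))) * (|Cc α 0 N| * wt β h 0 N x ξ) := by ring
      _ ≤ 1 * (|Cc α 0 N| * wt β h 0 N x ξ) := by gcongr
      _ ≤ _ := by rw [one_mul]; gcongr; linarith [abs_nonneg (Cc α 1 N)]
  · calc _ ≤ h^α * (Real.sqrt h * (Cc α 1 N * wt β h 0 N x ξ * h ^ (-(δ * ((α : ℝ) + ((1:ℕ) : ℝ)))))) := by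
          gcongr
          rw [e]; linarith
      _ ≤ h^α * (Real.sqrt h * (|Cc α 1 N| * wt β h 0 N x ξ * h ^ (-(δ * ((α : ℝ) + ((1:ℕ) : ℝ)))))) := by
          gcongr; exact le_abs_self _
      _ = (h^α * (Real.sqrt h * h ^ (-(δ * ((α : ℝ) + ((1:ℕ) : ℝ)))))) * (|Cc α 1 N| * wt β h 0 N x ξ) := by ring
      _ ≤ 1 * (|Cc α 1 N| * wt β h 0 N x ξ) := by gcongr
      _ ≤ _ := by rw [one_mul]; gcongr; linarith [abs_nonneg (Cc α 0 N)]
lemma pprime_eq (ξ : ℝ) : pprime ξ = ξ * (1 + ξ^2)^(-(1/2:ℝ)) := by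
  unfold pprime
  rw [Real.sqrt_eq_rpow, Real.rpow_neg (by positivity), div_eq_mul_inv]

lemma pprime_deriv (ξ : ℝ) : HasDerivAt pprime ((1 + ξ^2)^(-(1/2+1:ℝ))) ξ := by
  rw [show pprime = fun ξ => ξ * (1 + ξ^2)^(-(1/2:ℝ)) from funext pprime_eq]
  refine ((hasDerivAt_id ξ).mul (rp_deriv (1/2) ξ)).congr_deriv ?_
  rw [← rp_mul (1/2) ξ]
  simp only [id]
  ring

lemma pprime_inj : Function.Injective pprime := by
  refine StrictMono.injective (strictMono_of_deriv_pos fun ξ => ?_)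
  rw [(pprime_deriv ξ).deriv]
  positivity

lemma pprime_abs (ξ : ℝ) : |pprime ξ| ≤ 1 := by
  unfold pprime
  rw [abs_div, abs_of_nonneg (Real.sqrt_nonneg _)]
  refine div_le_one_of_le₀ ?_ (Real.sqrt_nonneg _)
  exact Real.abs_le_sqrt (by linarith)

lemma lam_bound {β h : ℝ} (hβ : 0 < β) (hh : 0 < h) (hh1 : h ≤ 1) (ξ : ℝ) :
    lam β h ξ ^ (-((3:ℕ):ℝ)) ≤ (1 + β⁻¹)^3 * h^(-(3*β)) * (1 + ξ^2)^(-(1/2+1:ℝ)) := by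
  have l1 := lam_one_le (ξ := ξ) hβ hh
  have l0 : 0 < lam β h ξ := by linarith
  have hb : 0 < h^β := by positivity
  have hb1 : h^β ≤ 1 := Real.rpow_le_one hh.le hh1 hβ.le
  have s1 : Real.sqrt (1 + ξ^2) ≤ 1 + |ξ| := by
    rw [Real.sqrt_le_left (by positivity)]
    nlinarith [sq_abs ξ, abs_nonneg ξ]
  have s2 : 1 + |ξ| ≤ (1 + β⁻¹) * (h^β)⁻¹ * lam β h ξ := by
    have : (1 + β⁻¹) * (h^β)⁻¹ * lam β h ξ = (1 + β⁻¹) * (h^β)⁻¹ + (β + 1) * |ξ| := by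
      unfold lam; field_simp
    rw [this]
    have i1 : 1 ≤ (h^β)⁻¹ := (one_le_inv₀ hb).2 hb1
    have i2 : 0 < β⁻¹ := by positivity
    nlinarith [abs_nonneg ξ, mul_nonneg hβ.le (abs_nonneg ξ)]
  have s3 := s1.trans s2
  set S := Real.sqrt (1 + ξ^2) with hS
  have S0 : 0 < S := by positivity
  have e1 : lam β h ξ ^ (-((3:ℕ):ℝ)) = ((lam β h ξ)⁻¹)^3 := by
    rw [Real.rpow_neg l0.le, Real.rpow_natCast, inv_pow]
  have e2 : (1 + ξ^2)^(-(1/2+1:ℝ)) = (S⁻¹)^3 := by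
    rw [hS, Real.sqrt_eq_rpow, ← Real.rpow_neg (by positivity), ← Real.rpow_natCast _ 3,
      ← Real.rpow_mul (by positivity)]
    norm_num
  have e3 : h^(-(3*β)) = ((h^β)⁻¹)^3 := by
    rw [← Real.rpow_neg hh.le, ← Real.rpow_natCast, ← Real.rpow_mul hh.le]
    congr 1; push_cast; ring
  rw [e1, e2, e3, ← mul_pow, ← mul_pow]
  gcongr
  rw [inv_le_iff_one_le_mul₀ l0, ← div_eq_mul_inv, div_mul_eq_mul_div, le_div_iff₀ S0]
  linarith

lemma jap_bound {β h : ℝ} (hβ : 0 < β) (hh : 0 < h) (hh1 : h ≤ 1) (w : ℝ) :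
    jap (w / Real.sqrt h) ^ (-(1:ℝ)) ≤
      Real.sqrt h + 2^β * h^(-β) * jap (w / Real.sqrt h) ^ (-(1+β)) := by
  have j0 := jap_pos (w / Real.sqrt h)
  have hs : 0 < Real.sqrt h := Real.sqrt_pos.2 hh
  have hsq : Real.sqrt h ^ 2 = h := Real.sq_sqrt hh.le
  rcases le_total 1 |w| with hw | hw
  · have : (Real.sqrt h)⁻¹ ≤ jap (w / Real.sqrt h) := by
      unfold jap
      refine Real.le_sqrt_of_sq_le ?_
      rw [div_pow, ← sq_abs w, inv_pow, ← one_div]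
      have : 1 / Real.sqrt h^2 ≤ |w|^2 / Real.sqrt h^2 := by
        gcongr; nlinarith
      linarith
    rw [Real.rpow_neg_one]
    have h2 : (jap (w / Real.sqrt h))⁻¹ ≤ Real.sqrt h := inv_le_of_inv_le₀ hs this
    have : 0 ≤ 2^β * h^(-β) * jap (w / Real.sqrt h) ^ (-(1+β)) := by positivity
    linarith
  · have h1 : jap (w / Real.sqrt h) ≤ 2 * h⁻¹ := by
      unfold jap
      rw [Real.sqrt_le_left (by positivity), div_pow, hsq, ← sq_abs w]
      have i1 : 1 ≤ h⁻¹ := (one_le_inv₀ hh).2 hh1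
      have : |w|^2/h ≤ h⁻¹ := by
        rw [← one_div]; gcongr; nlinarith [abs_nonneg w]
      nlinarith
    have h2 : jap (w / Real.sqrt h) ^ β ≤ 2^β * h^(-β) := by
      refine (Real.rpow_le_rpow j0.le h1 hβ.le).trans ?_
      rw [Real.mul_rpow (by norm_num) (by positivity), Real.inv_rpow hh.le, Real.rpow_neg hh.le]
    have e : jap (w / Real.sqrt h) ^ (-(1:ℝ)) = jap (w / Real.sqrt h) ^ β * jap (w / Real.sqrt h) ^ (-(1+β)) := by
      rw [← Real.rpow_add j0]; congr 1; ring
    rw [e]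
    have : jap (w / Real.sqrt h) ^ β * jap (w / Real.sqrt h) ^ (-(1+β)) ≤ 2^β * h^(-β) * jap (w / Real.sqrt h) ^ (-(1+β)) := by
      gcongr
    linarith

lemma jap_cont : Continuous jap := by unfold jap; fun_prop

lemma jap_int {β : ℝ} (hβ : 0 < β) : Integrable (fun z => jap z ^ (-(1+β))) := by
  have := integrable_rpow_neg_one_add_norm_sq (E := ℝ) (μ := volume) (r := 1 + β) (by simpa using hβ)
  refine this.congr (Eventually.of_forall fun z => ?_)
  simp only [jap]
  rw [Real.sqrt_eq_rpow, ← Real.rpow_mul (by positivity), Real.norm_eq_abs, sq_abs]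
  congr 1; ring

lemma wt_int (β : ℝ) (hβ : 0 < β) : ∃ C : ℝ, 0 ≤ C ∧ ∀ h : ℝ, 0 < h → h ≤ 1 → ∀ s X : ℝ,
    Integrable (fun ξ => wt β h s 3 X ξ) ∧
    ∫ ξ, wt β h s 3 X ξ ≤ C * h ^ (1/2 - (s + 4) * β) := by
  set Ib := ∫ z, jap z ^ (-(1+β)) with hIb
  have hIb0 : 0 ≤ Ib := integral_nonneg fun z => by have := jap_pos z; positivity
  refine ⟨(1 + β⁻¹)^3 * (2 + 2^β * Ib), by positivity, fun h hh hh1 s X => ?_⟩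
  have hs : 0 < Real.sqrt h := Real.sqrt_pos.2 hh
  set G : ℝ → ℝ := fun z => (Set.Icc (-1:ℝ) 1).indicator (fun _ => Real.sqrt h) z +
    2^β * h^(-β) * jap ((X + z) / Real.sqrt h) ^ (-(1+β)) with hG
  have i1 : Integrable ((Set.Icc (-1:ℝ) 1).indicator (fun _ => Real.sqrt h)) :=
    (integrable_indicator_iff measurableSet_Icc).2 (by simp)
  have i2 : Integrable (fun z => jap ((X + z) / Real.sqrt h) ^ (-(1+β))) :=
    ((jap_int hβ).comp_div hs.ne').comp_add_left X
  have iG : Integrable G := i1.add (i2.const_mul _)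
  have G0 : ∀ z, 0 ≤ G z := fun z => by
    have := jap_pos ((X + z) / Real.sqrt h)
    refine add_nonneg (Set.indicator_nonneg (fun _ _ => hs.le) _) (by positivity)
  have intG : ∫ z, G z = (2 + 2^β * h^(-β) * Ib) * Real.sqrt h := by
    rw [hG, integral_add i1 (i2.const_mul _), integral_const_mul, integral_indicator measurableSet_Icc,
      integral_add_left_eq_self (fun z => jap (z / Real.sqrt h) ^ (-(1+β))) X,
      Measure.integral_comp_div (fun z => jap z ^ (-(1+β))), abs_of_pos hs, ← hIb]
    simp
    ring
  have hd : ∀ ξ ∈ Set.univ, HasDerivWithinAt pprime ((1 + ξ^2)^(-(1/2+1:ℝ))) Set.univ ξ :=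
    fun ξ _ => (pprime_deriv ξ).hasDerivWithinAt
  have cv := integral_image_eq_integral_abs_deriv_smul MeasurableSet.univ hd pprime_inj.injOn G
  have ci := (integrableOn_image_iff_integrableOn_abs_deriv_smul MeasurableSet.univ hd
    pprime_inj.injOn G).1 iG.integrableOn
  rw [integrableOn_univ] at ci
  rw [setIntegral_univ] at cv
  have abse : ∀ ξ : ℝ, |(1 + ξ^2)^(-(1/2+1:ℝ))| = (1 + ξ^2)^(-(1/2+1:ℝ)) := fun ξ =>
    abs_of_nonneg (by positivity)
  simp only [abse, smul_eq_mul] at ci cv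
  have leG : ∫ ξ : ℝ, (1 + ξ^2)^(-(1/2+1:ℝ)) * G (pprime ξ) ≤ (2 + 2^β * h^(-β) * Ib) * Real.sqrt h := by
    rw [← cv, ← intG]
    exact setIntegral_le_integral iG (Eventually.of_forall G0)
  set k := h ^ (-(s*β)) * ((1 + β⁻¹)^3 * h^(-(3*β))) with hk
  have k0 : 0 ≤ k := by positivity
  have pt : ∀ ξ, wt β h s 3 X ξ ≤ k * ((1 + ξ^2)^(-(1/2+1:ℝ)) * G (pprime ξ)) := by
    intro ξ
    unfold wt
    have a1 := lam_bound hβ hh hh1 ξ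
    have a2 := jap_bound hβ hh hh1 (X + pprime ξ)
    have a3 : Real.sqrt h + 2^β * h^(-β) * jap ((X + pprime ξ) / Real.sqrt h) ^ (-(1+β)) = G (pprime ξ) := by
      simp only [hG]
      rw [Set.indicator_of_mem (Set.mem_Icc.2 (abs_le.1 (pprime_abs ξ)))]
    rw [a3] at a2
    have := lam_one_le (ξ := ξ) hβ hh
    have : 0 ≤ lam β h ξ := by linarith
    calc _ ≤ h ^ (-(s*β)) * (G (pprime ξ) * ((1 + β⁻¹)^3 * h^(-(3*β)) * (1 + ξ^2)^(-(1/2+1:ℝ)))) := by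
          gcongr
          exact G0 _
      _ = _ := by rw [hk]; ring
  have iw : Integrable (fun ξ => wt β h s 3 X ξ) := by
    refine (ci.const_mul k).mono' ?_ (Eventually.of_forall fun ξ => ?_)
    · have hp : Continuous pprime := continuous_iff_continuousAt.2 fun ξ => (pprime_deriv ξ).continuousAt
      have c1 : Continuous (fun ξ => jap ((X + pprime ξ) / Real.sqrt h)) :=
        jap_cont.comp (by fun_prop)
      have c2 : Continuous (fun ξ => lam β h ξ) := by unfold lam; fun_prop
      refine Continuous.aestronglyMeasurable ?_
      unfold wt
      refine continuous_const.mul ((c1.rpow_const fun ξ => Or.inl (jap_pos _).ne').mul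
        (c2.rpow_const fun ξ => Or.inl ?_))
      have := lam_one_le (ξ := ξ) hβ hh
      linarith
    · rw [Real.norm_of_nonneg (wt_nonneg hβ hh _ _ _)]
      exact pt ξ
  refine ⟨iw, ?_⟩
  calc ∫ ξ, wt β h s 3 X ξ ≤ ∫ ξ, k * ((1 + ξ^2)^(-(1/2+1:ℝ)) * G (pprime ξ)) :=
        integral_mono iw (ci.const_mul k) pt
    _ = k * ∫ ξ, ((1 + ξ^2)^(-(1/2+1:ℝ)) * G (pprime ξ)) := integral_const_mul _ _
    _ ≤ k * ((2 + 2^β * h^(-β) * Ib) * Real.sqrt h) := by gcongr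
    _ ≤ k * (((2 + 2^β * Ib) * h^(-β)) * Real.sqrt h) := by
        gcongr
        have : 1 ≤ h^(-β) := Real.one_le_rpow_of_pos_of_le_one_of_nonpos hh hh1 (by linarith)
        nlinarith
    _ = (1 + β⁻¹)^3 * (2 + 2^β * Ib) * (h ^ (-(s*β)) * h^(-(3*β)) * h^(-β) * Real.sqrt h) := by
        rw [hk]; ring
    _ = _ := by
        rw [Real.sqrt_eq_rpow, ← Real.rpow_add hh, ← Real.rpow_add hh, ← Real.rpow_add hh]
        congr 2; ring
def Kk (h : ℝ) (b : S2) (x y : ℝ) : ℂ :=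
  ∫ ξ : ℝ, Complex.exp (Complex.I * (((x - y) * ξ / h : ℝ) : ℂ)) * b ((x + y)/2, ξ)

lemma slice_int (h : ℝ) (b : S2) (x y : ℝ) : Integrable (fun ξ : ℝ =>
    Complex.exp (Complex.I * (((x - y) * ξ / h : ℝ) : ℂ)) * b ((x + y)/2, ξ)) := by
  obtain ⟨C, hC, H⟩ := S2_decay b
  refine (integrable_inv_one_add_sq.const_mul C).mono' ?_ (Eventually.of_forall fun ξ => ?_)
  · have := b.continuous
    exact Continuous.aestronglyMeasurable (by fun_prop)
  · rw [norm_mul, norm_expI, one_mul]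
    refine (H _ _).trans ?_
    gcongr
    exact mul_le_of_le_one_left (by positivity) (inv_le_one_aux _)

lemma K_ibp (h : ℝ) (hh : h ≠ 0) (b : S2) (x y : ℝ) :
    (Complex.I * (((x - y) / h : ℝ) : ℂ)) * Kk h b x y = - Kk h (D2 b) x y := by
  have hd : ∀ ξ : ℝ, HasDerivAt (fun ξ : ℝ =>
      Complex.exp (Complex.I * (((x - y) * ξ / h : ℝ) : ℂ)) * b ((x + y)/2, ξ))
      ((Complex.I * (((x - y) / h : ℝ) : ℂ)) * (Complex.exp (Complex.I * (((x - y) * ξ / h : ℝ) : ℂ)) * b ((x + y)/2, ξ))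
        + Complex.exp (Complex.I * (((x - y) * ξ / h : ℝ) : ℂ)) * D2 b ((x + y)/2, ξ)) ξ := by
    intro ξ
    have h1 : HasDerivAt (fun ξ : ℝ => (((x - y) * ξ / h : ℝ) : ℂ)) (((x - y) * 1 / h : ℝ) : ℂ) ξ :=
      (((hasDerivAt_id ξ).const_mul (x - y)).div_const h).ofReal_comp
    have h2 := ((h1.const_mul Complex.I).cexp).mul (D2_hasDerivAt b ((x+y)/2) ξ)
    refine h2.congr_deriv ?_
    rw [mul_one]
    ring
  have i1 := (slice_int h b x y).const_mul (Complex.I * (((x - y) / h : ℝ) : ℂ))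
  have i2 := slice_int h (D2 b) x y
  have := integral_eq_zero_of_hasDerivAt_of_integrable hd (i1.add i2) (slice_int h b x y)
  rw [integral_add i1 i2, integral_const_mul] at this
  exact eq_neg_of_add_eq_zero_left this

lemma K_norm (h : ℝ) (b : S2) (x y B : ℝ) (f : ℝ → ℝ) (hf : Integrable f)
    (hb : ∀ ξ, ‖b ((x+y)/2, ξ)‖ ≤ f ξ) (hB : ∫ ξ, f ξ ≤ B) : ‖Kk h b x y‖ ≤ B := by
  refine (norm_integral_le_of_norm_le hf (Eventually.of_forall fun ξ => ?_)).trans hB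
  rw [norm_mul, norm_expI, one_mul]
  exact hb ξ

lemma K_bound {h : ℝ} (hh : 0 < h) (b : S2) (x y B : ℝ) (f : ℝ → ℝ) (hf : Integrable f)
    (hb : ∀ ξ, ‖b ((x+y)/2, ξ)‖ ≤ f ξ) (hb2 : ∀ ξ, Real.sqrt h * ‖D2 b ((x+y)/2, ξ)‖ ≤ f ξ)
    (hB : ∫ ξ, f ξ ≤ B) :
    ‖Kk h b x y‖ ≤ 2 * B * (1 + ((x - y)/Real.sqrt h)^2)^(-(1/2:ℝ)) := by
  have hs : 0 < Real.sqrt h := Real.sqrt_pos.2 hh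
  have hsq : Real.sqrt h * Real.sqrt h = h := Real.mul_self_sqrt hh.le
  have k1 := K_norm h b x y B f hf hb hB
  have k2 : Real.sqrt h * ‖Kk h (D2 b) x y‖ ≤ B := by
    rw [← le_div_iff₀' hs]
    refine K_norm h (D2 b) x y _ (fun ξ => f ξ / Real.sqrt h) (hf.div_const _)
      (fun ξ => ?_) ?_
    · rw [le_div_iff₀' hs]; exact hb2 ξ
    · rw [integral_div]; gcongr
  have k3 := congrArg norm (K_ibp h hh.ne' b x y)
  rw [norm_neg, norm_mul, norm_mul, Complex.norm_I, one_mul, Complex.norm_real, Real.norm_eq_abs] at k3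
  rw [← k3, ← mul_assoc] at k2
  have e : Real.sqrt h * |(x - y)/h| = |(x-y)/Real.sqrt h| := by
    rw [abs_div, abs_div, abs_of_pos hh, abs_of_pos hs]
    field_simp
    rw [sq, hsq]
    ring
  rw [e] at k2
  set w := (x-y)/Real.sqrt h
  set k := ‖Kk h b x y‖
  have k0 : 0 ≤ k := norm_nonneg _
  rw [Real.rpow_neg (by positivity), ← Real.sqrt_eq_rpow, ← div_eq_mul_inv, le_div_iff₀ (by positivity)]
  have s1 : Real.sqrt (1 + w^2) ≤ 1 + |w| := by
    rw [Real.sqrt_le_left (by positivity)]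
    nlinarith [sq_abs w, abs_nonneg w]
  nlinarith [mul_le_mul_of_nonneg_left s1 k0]

lemma uop_K (h : ℝ) (b : S2) (v : SchwartzMap ℝ ℂ) (x : ℝ) :
    uop h b v x = ((2 * Real.pi * h : ℝ) : ℂ)⁻¹ * ∫ y, Kk h b x y * v y := by
  unfold uop
  congr 1
  have := integral_prod_symm _ (Gk_int h b v x)
  refine this.trans ?_
  congr 1; funext y
  unfold Kk
  rw [← integral_mul_const]
  rfl

lemma uop_bound {h : ℝ} (hh : 0 < h) (b : S2) (v : SchwartzMap ℝ ℂ) (x B : ℝ)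
    (hK : ∀ y, ‖Kk h b x y‖ ≤ 2 * B * (1 + ((x - y)/Real.sqrt h)^2)^(-(1/2:ℝ))) :
    ‖uop h b v x‖ ≤ 2 * B * h⁻¹ * h^(1/4:ℝ) * L2Norm (fun y => v y) := by
  have hs : 0 < Real.sqrt h := Real.sqrt_pos.2 hh
  have hB : 0 ≤ B := by
    have := (norm_nonneg _).trans (hK x)
    have p : 0 < (1 + ((x - x)/Real.sqrt h)^2)^(-(1/2:ℝ)) := by positivity
    have := nonneg_of_mul_nonneg_left this p
    linarith
  set kk : ℝ → ℝ := fun y => (1 + ((x - y)/Real.sqrt h)^2)^(-(1/2:ℝ)) with hkk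
  have kk0 : ∀ y, 0 ≤ kk y := fun y => by positivity
  have kksq : ∀ y, kk y ^ (2:ℝ) = (1 + ((x - y)/Real.sqrt h)^2)⁻¹ := by
    intro y
    simp only [hkk]
    rw [← Real.rpow_mul (by positivity), ← Real.rpow_neg_one]
    norm_num
  have ik : Integrable (fun y : ℝ => (1 + ((x - y)/Real.sqrt h)^2)⁻¹) :=
    (integrable_inv_one_add_sq.comp_div hs.ne').comp_sub_left x
  have kkc : Continuous kk := by
    refine Continuous.rpow_const (by fun_prop) fun y => Or.inl (by positivity)
  have m1 : MemLp kk (ENNReal.ofReal 2) := by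
    rw [ENNReal.ofReal_ofNat, memLp_two_iff_integrable_sq kkc.aestronglyMeasurable]
    refine ik.congr (Eventually.of_forall fun y => ?_)
    simp only
    rw [← kksq, Real.rpow_two]
  have m2 : MemLp (fun y => ‖v y‖) (ENNReal.ofReal 2) := by
    rw [ENNReal.ofReal_ofNat]
    exact (v.memLp 2).norm
  have hol := integral_mul_le_Lp_mul_Lq_of_nonneg (μ := volume) Real.HolderConjugate.two_two
    (Eventually.of_forall kk0) (Eventually.of_forall fun y => norm_nonneg (v y)) m1 m2
  have ikv : Integrable (fun y => kk y * ‖v y‖) := by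
    have m1' := m1
    have m2' := m2
    rw [ENNReal.ofReal_ofNat] at m1' m2'
    exact m1'.integrable_mul m2'
  have ek : ∫ y, kk y ^ (2:ℝ) = Real.sqrt h * Real.pi := by
    simp only [kksq]
    rw [integral_sub_left_eq_self (fun y => (1 + (y/Real.sqrt h)^2)⁻¹) volume x,
      Measure.integral_comp_div (fun z => (1 + z^2)⁻¹), integral_univ_inv_one_add_sq,
      abs_of_pos hs, smul_eq_mul]
  have ev : (∫ y, ‖v y‖ ^ (2:ℝ)) ^ (1/(2:ℝ)) = L2Norm (fun y => v y) := by
    unfold L2Norm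
    simp only [Real.rpow_two]
  rw [ek, ev] at hol
  have hL : 0 ≤ L2Norm (fun y => v y) := by
    unfold L2Norm
    exact Real.rpow_nonneg (integral_nonneg fun y => by positivity) _
  have e14 : (Real.sqrt h * Real.pi) ^ (1/(2:ℝ)) = h^(1/4:ℝ) * Real.sqrt Real.pi := by
    rw [Real.mul_rpow (by positivity) Real.pi_pos.le, Real.sqrt_eq_rpow, Real.sqrt_eq_rpow,
      ← Real.rpow_mul hh.le]
    norm_num
  rw [e14] at hol
  have spi : Real.sqrt Real.pi ≤ 2 * Real.pi := by
    rw [Real.sqrt_le_left (by positivity)]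
    nlinarith [Real.pi_gt_three]
  rw [uop_K, norm_mul, norm_inv, Complex.norm_real, Real.norm_of_nonneg (by positivity)]
  calc _ ≤ (2 * Real.pi * h)⁻¹ * ∫ y, 2 * B * (kk y * ‖v y‖) := by
        gcongr
        refine norm_integral_le_of_norm_le (ikv.const_mul _) (Eventually.of_forall fun y => ?_)
        rw [norm_mul, ← mul_assoc]
        gcongr
        exact hK y
    _ = (2 * Real.pi * h)⁻¹ * (2 * B * ∫ y, kk y * ‖v y‖) := by rw [integral_const_mul]
    _ ≤ (2 * Real.pi * h)⁻¹ * (2 * B * (h^(1/4:ℝ) * (2 * Real.pi) * L2Norm (fun y => v y))) := by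
        gcongr
        refine hol.trans ?_
        gcongr
    _ = _ := by field_simp

lemma main_sup (β : ℝ) (hβ : 0 < β) (C : ℕ → ℕ → ℝ) (hC : ∀ α N, 0 ≤ C α N) (s : ℝ) :
    ∃ C' : ℝ, 0 ≤ C' ∧ ∀ h : ℝ, 0 < h → h ≤ 1 → ∀ b : S2, Good β h s C b →
      ∀ (v : SchwartzMap ℝ ℂ) (x : ℝ),
        ‖uop h b v x‖ ≤ C' * h ^ (-(1/4 : ℝ) - (s+4) * β) * L2Norm (fun y => v y) := by
  obtain ⟨Cw, hCw, H⟩ := wt_int β hβ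
  refine ⟨2 * (C 0 3 * Cw), mul_nonneg two_pos.le (mul_nonneg (hC _ _) hCw), fun h hh hh1 b hb v x => ?_⟩
  have hK : ∀ y, ‖Kk h b x y‖ ≤ 2 * (C 0 3 * (Cw * h ^ (1/2 - (s + 4) * β))) *
      (1 + ((x - y)/Real.sqrt h)^2)^(-(1/2:ℝ)) := by
    intro y
    obtain ⟨i, I⟩ := H h hh hh1 s ((x+y)/2)
    refine K_bound hh b x y _ (fun ξ => C 0 3 * wt β h s 3 ((x+y)/2) ξ) (i.const_mul _) ?_ ?_ ?_
    · intro ξ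
      simpa using (hb 0 3 ((x+y)/2) ξ).1
    · intro ξ
      simpa using (hb 0 3 ((x+y)/2) ξ).2
    · rw [integral_const_mul]
      exact mul_le_mul_of_nonneg_left I (hC _ _)
  refine (uop_bound hh b v x _ hK).trans (le_of_eq ?_)
  have e : h ^ (-(1/4 : ℝ) - (s+4) * β) = h ^ (1/2 - (s + 4) * β) * h⁻¹ * h^(1/4:ℝ) := by
    rw [← Real.rpow_neg_one, ← Real.rpow_add hh, ← Real.rpow_add hh]
    congr 1; ring
  rw [e]; ring

/-- **Continuity from `L²` to `W^{ρ,∞}_h`** for Weyl operators with symbol in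
`S_{δ,β}(⟨(x+p'(ξ))/√h⟩^{−1})`, `β > 0` : the operator norm is `O(h^{−1/4−σ})`, with
`σ > 0` depending linearly on `β`. -/
theorem opW_continuity_L2_Winf
    (ρ : ℕ) (δ : ℝ) (hδ : δ ∈ Set.Icc (0:ℝ) (1/2)) :
    ∃ K : ℝ, 0 < K ∧
      ∀ β : ℝ, 0 < β → ∀ Cc : ℕ → ℕ → ℕ → ℝ,
        ∃ C : ℝ, 0 < C ∧
          ∀ a : ℝ → ℝ → ℝ → ℂ, SchwartzFamily a →
            SymBound δ β
              (fun h x ξ => jap ((x + pprime ξ) / Real.sqrt h) ^ (-(1:ℝ))) Cc a →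
            ∀ h ∈ Set.Ioc (0:ℝ) 1, ∀ v : SchwartzMap ℝ ℂ,
              WhNorm h ρ (OpW h (a h) (fun x => v x)) ≤
                C * h ^ (-(1/4 : ℝ) - K * β) * L2Norm (fun x => v x) := by
  obtain ⟨Cg, hCg, HG⟩ := mult_bound ((ρ:ℝ)/2 + 1) (by have : (0:ℝ) ≤ ρ := by positivity
                                                       linarith)
  refine ⟨2 * ((ρ + 1 : ℕ) : ℝ) + 4, by positivity, fun β hβ Cc => ?_⟩
  have hC0 : ∀ α N : ℕ, 0 ≤ (fun α N => |Cc α 0 N| + |Cc α 1 N|) α N := fun α N => by positivity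
  obtain ⟨C', hC', H⟩ := main_sup β hβ _ (CQ_iter_nonneg hβ (ρ+1) hC0) (0 + 2 * ((ρ + 1 : ℕ) : ℝ))
  refine ⟨Cg * C' + 1, by positivity, fun a haS ha h hh v => ?_⟩
  obtain ⟨b, hb⟩ := haS h hh
  have hb' : a h = fun x ξ => b (x, ξ) := by funext x ξ; exact (hb x ξ).symm
  have hg := Good_Q_iter hβ hh.1 hh.2 (ρ+1) hC0 (Good_init hδ hβ hh.1 hh.2 ha hb')
  have hsup := H h hh.1 hh.2 _ hg v
  have hL : 0 ≤ L2Norm (fun y => v y) := by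
    unfold L2Norm
    exact Real.rpow_nonneg (integral_nonneg fun y => by positivity) _
  have hp : 0 ≤ h ^ (-(1/4 : ℝ) - (2 * ((ρ + 1 : ℕ) : ℝ) + 4) * β) := Real.rpow_nonneg hh.1.le _
  rw [zero_add] at hsup
  rw [hb', uop_eq]
  unfold WhNorm LinfNorm
  refine Real.iSup_le (fun x => ?_) (by positivity)
  have e : JBh h ρ (uop h b v) = FTinv (fun ξ => gr ((ρ:ℝ)/2 + 1) (h * ξ) *
      FT (uop h ((Qop h)^[ρ+1] b) v) ξ) := by
    unfold JBh FMul
    congr 1; funext ξ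
    rw [FT_Q_iter h hh.1.ne', ← mul_assoc]
    congr 1
    unfold gr
    rw [← Complex.ofReal_pow, ← Complex.ofReal_mul, ← Real.rpow_natCast _ (ρ+1),
      ← Real.rpow_add (by positivity)]
    have ex : (ρ:ℝ)/2 = -((ρ:ℝ)/2+1) + ((ρ+1:ℕ):ℝ) := by push_cast; ring
    simp only [← ex]
  rw [e]
  refine (HG h hh.1 _ (uop_int h hh.1.ne' _ v) _ hsup x).trans ?_
  nlinarith [mul_nonneg hp hL]

end
end

section
/- For every β > 0 and every integer N ≥ 2 there is a constant C > 0 such that for all h ∈ (0,1] and all X ∈ ℝ, ∫_ℝ (1 + (h^{β+1/2} ξ)²)^{−N} · (1 + (X + p'(h^{1/2} ξ))²/h)^{−1} dξ ≤ C² h^{−2βN}; equivalently, the L² norm in ξ of the function ξ ↦ ⟨h^β √h ξ⟩^{−N} ⟨(X + p'(√h ξ))/√h⟩^{−1} is at most C h^{−βN}, uniformly in X ∈ ℝ and h ∈ (0,1]. -/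
noncomputable section

open MeasureTheory

theorem pprime_hasDerivAt (x : ℝ) :
    HasDerivAt pprime ((Real.sqrt (1 + x^2))⁻¹ ^ 3) x := by
  have h0 : (0:ℝ) < 1 + x^2 := by positivity
  have h1 : HasDerivAt (fun y : ℝ => 1 + y^2) (2 * x) x := by
    simpa using (hasDerivAt_pow 2 x).const_add 1
  have h2 := h1.sqrt h0.ne'
  have hs : 0 < Real.sqrt (1 + x^2) := Real.sqrt_pos.2 h0
  have h3 := (hasDerivAt_id x).div h2 hs.ne'
  have hq : Real.sqrt (1 + x^2) ^ 2 = 1 + x^2 := Real.sq_sqrt h0.le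
  refine h3.congr_deriv ?_
  generalize Real.sqrt (1 + x^2) = s at *
  simp only [id]
  field_simp
  linarith

theorem aux_hasDerivAt (h : ℝ) (hh : 0 < h) (X ξ : ℝ) :
    HasDerivAt (fun ξ => Real.arctan ((X + pprime (Real.sqrt h * ξ)) / Real.sqrt h))
      ((Real.sqrt (1 + (Real.sqrt h * ξ)^2))⁻¹ ^ 3 *
        (1 + (X + pprime (Real.sqrt h * ξ))^2 / h)⁻¹) ξ := by
  have hs : 0 < Real.sqrt h := Real.sqrt_pos.2 hh
  have h1 : HasDerivAt (fun y : ℝ => Real.sqrt h * y) (Real.sqrt h) ξ := by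
    simpa using (hasDerivAt_id ξ).const_mul (Real.sqrt h)
  have h2 := (((pprime_hasDerivAt (Real.sqrt h * ξ)).comp ξ h1).const_add X).div_const (Real.sqrt h)
  have h3 := h2.arctan
  refine h3.congr_deriv ?_
  simp only [Function.comp]
  rw [div_pow, Real.sq_sqrt hh.le, mul_div_assoc, div_self hs.ne', mul_one, one_div, mul_comm]

theorem aux_cont (h : ℝ) (hh : 0 < h) (X : ℝ) : Continuous (fun ξ : ℝ =>
      (Real.sqrt (1 + (Real.sqrt h * ξ)^2))⁻¹ ^ 3 *
        (1 + (X + pprime (Real.sqrt h * ξ))^2 / h)⁻¹) := by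
  have hp : Continuous pprime :=
    continuous_iff_continuousAt.2 fun x => (pprime_hasDerivAt x).continuousAt
  refine Continuous.mul (Continuous.pow (Continuous.inv₀ (by fun_prop) ?_) 3)
    (Continuous.inv₀ (by fun_prop) ?_)
  · intro x
    exact (Real.sqrt_pos.2 (by positivity)).ne'
  · intro x
    positivity

theorem aux_integrable (h : ℝ) (hh : 0 < h) (X : ℝ) : Integrable (fun ξ : ℝ =>
      (Real.sqrt (1 + (Real.sqrt h * ξ)^2))⁻¹ ^ 3 *
        (1 + (X + pprime (Real.sqrt h * ξ))^2 / h)⁻¹) := by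
  have hs : 0 < Real.sqrt h := Real.sqrt_pos.2 hh
  have hi := integrable_inv_one_add_sq.comp_mul_left' hs.ne'
  refine hi.mono' (aux_cont h hh X).aestronglyMeasurable (Filter.Eventually.of_forall fun ξ => ?_)
  have h0 : (1:ℝ) ≤ 1 + (Real.sqrt h * ξ)^2 := by nlinarith [sq_nonneg (Real.sqrt h * ξ)]
  have h1 : 1 ≤ Real.sqrt (1 + (Real.sqrt h * ξ)^2) := Real.one_le_sqrt.2 h0
  have hq := Real.sq_sqrt (zero_le_one.trans h0)
  have h2 : (1 + (X + pprime (Real.sqrt h * ξ))^2 / h)⁻¹ ≤ 1 := by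
    apply inv_le_one_of_one_le₀
    have : 0 ≤ (X + pprime (Real.sqrt h * ξ))^2 / h := by positivity
    linarith
  rw [Real.norm_of_nonneg (by positivity)]
  refine (mul_le_of_le_one_right (by positivity) h2).trans ?_
  rw [inv_pow]
  apply inv_anti₀ (by positivity)
  nlinarith [sq_nonneg (Real.sqrt (1 + (Real.sqrt h * ξ)^2))]

theorem aux_integral (h : ℝ) (hh : 0 < h) (X : ℝ) : (∫ ξ : ℝ,
      (Real.sqrt (1 + (Real.sqrt h * ξ)^2))⁻¹ ^ 3 *
        (1 + (X + pprime (Real.sqrt h * ξ))^2 / h)⁻¹) ≤ Real.pi := by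
  have ht := intervalIntegral_tendsto_integral (aux_integrable h hh X)
    Filter.tendsto_neg_atTop_atBot Filter.tendsto_id
  refine le_of_tendsto ht (Filter.Eventually.of_forall fun r => ?_)
  rw [intervalIntegral.integral_eq_sub_of_hasDerivAt (fun x _ => aux_hasDerivAt h hh X x)
    ((aux_cont h hh X).intervalIntegrable _ _)]
  have h1 := Real.arctan_lt_pi_div_two ((X + pprime (Real.sqrt h * id r)) / Real.sqrt h)
  have h2 := Real.neg_pi_div_two_lt_arctan ((X + pprime (Real.sqrt h * -r)) / Real.sqrt h)
  linarith

theorem aux_pt (β : ℝ) (hβ : 0 < β) (N : ℕ) (hN : 2 ≤ N) (h : ℝ) (hh : 0 < h) (h1 : h ≤ 1)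
    (ξ : ℝ) : (1 + (h ^ (β + 1/2) * ξ)^2) ^ (-(N : ℝ)) ≤
      h ^ (-(2 * β * (N : ℝ))) * (Real.sqrt (1 + (Real.sqrt h * ξ)^2))⁻¹ ^ 3 := by
  have ha : 0 < h ^ β := Real.rpow_pos_of_pos hh β
  have ha1 : h ^ β ≤ 1 := Real.rpow_le_one hh.le h1 hβ.le
  have e1 : h ^ (β + 1/2) * ξ = h ^ β * (Real.sqrt h * ξ) := by
    rw [Real.rpow_add hh, Real.sqrt_eq_rpow, mul_assoc]
  have e2 : h ^ (-(2 * β * (N : ℝ))) = (((h ^ β) ^ 2) ^ N)⁻¹ := by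
    rw [Real.rpow_neg hh.le, ← pow_mul, ← Real.rpow_natCast, ← Real.rpow_mul hh.le]
    congr 2
    push_cast
    ring
  rw [e1, e2, Real.rpow_neg (by positivity), Real.rpow_natCast]
  generalize Real.sqrt h * ξ = η
  generalize h ^ β = a at *
  have h0 : (1:ℝ) ≤ 1 + η^2 := by nlinarith [sq_nonneg η]
  have hs1 : 1 ≤ Real.sqrt (1 + η^2) := Real.one_le_sqrt.2 h0
  have hq := Real.sq_sqrt (zero_le_one.trans h0)
  rw [inv_pow, ← mul_inv]
  apply inv_anti₀ (by positivity)
  have hb : a^2 * (1 + η^2) ≤ 1 + (a * η)^2 := by nlinarith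
  calc (a^2)^N * Real.sqrt (1 + η^2) ^ 3 ≤ (a^2)^N * (1 + η^2)^N := by
        gcongr
        rw [← hq, ← pow_mul]
        rw [hq]
        exact pow_le_pow_right₀ hs1 (by omega)
    _ = (a^2 * (1 + η^2))^N := (mul_pow _ _ _).symm
    _ ≤ _ := by gcongr

/-- **Key integral estimate** : for every `β > 0` and `N ≥ 2` there is `C > 0` with
`∫ (1+(h^{β+1/2}ξ)²)^{−N} (1+(X+p'(√h ξ))²/h)⁻¹ dξ ≤ C² h^{−2βN}`, uniformly in
`X ∈ ℝ` and `h ∈ (0,1]`. -/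
theorem integral_estimate_near_Lambda (β : ℝ) (hβ : 0 < β) (N : ℕ) (hN : 2 ≤ N) :
    ∃ C : ℝ, 0 < C ∧ ∀ h ∈ Set.Ioc (0:ℝ) 1, ∀ X : ℝ,
      (∫ ξ : ℝ, (1 + (h ^ (β + 1/2) * ξ)^2) ^ (-(N : ℝ)) *
          (1 + (X + pprime (Real.sqrt h * ξ))^2 / h)⁻¹) ≤
        C^2 * h ^ (-(2 * β * (N : ℝ))) := by
  refine ⟨Real.sqrt Real.pi, Real.sqrt_pos.2 Real.pi_pos, ?_⟩
  rintro h ⟨hh, h1⟩ X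
  rw [Real.sq_sqrt Real.pi_pos.le]
  have hm : 0 ≤ h ^ (-(2 * β * (N : ℝ))) := Real.rpow_nonneg hh.le _
  refine (integral_mono_of_nonneg (Filter.Eventually.of_forall fun ξ => ?_)
    ((aux_integrable h hh X).const_mul (h ^ (-(2 * β * (N : ℝ)))))
    (Filter.Eventually.of_forall fun ξ => ?_)).trans ?_
  · simp only [Pi.zero_apply]
    positivity
  · simp only
    rw [← mul_assoc]
    exact mul_le_mul_of_nonneg_right (aux_pt β hβ N hN h hh h1 ξ) (by positivity)
  · rw [integral_const_mul, mul_comm]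
    exact mul_le_mul_of_nonneg_right (aux_integral h hh X) hm

end
end
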